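/- Let R be a commutative ring, 𝔗 a half centered torsion theory over R, 𝔞 a finitely generated ideal of R with generating set y₁,…,y_s, and M an R-module. If x₁,…,x_r is a weak M-regular sequence with respect to 𝔗 consisting of elements of 𝔞, then the Koszul cohomology modules H^i(y₁,…,y_s; M) belong to 𝔗 for all 0 ≤ i ≤ r−1; moreover, H^r(y₁,…,y_s; M) ∉ 𝔗 if and only if H^0(y₁,…,y_s; M/(x₁,…,x_r)M) ∉ 𝔗. -/

import Mathlib

open CategoryTheory

universe u

noncomputable section

/-- A torsion theory over `R`: a class of `R`-modules closed under isomorphism, submodules,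
quotient modules, extensions, and directed colimits (formulated as closure under directed
unions of submodules). -/
structure IsTorsionTheory (R : Type u) [CommRing R] (T : Set (ModuleCat.{u} R)) : Prop where
  mem_of_iso : ∀ {N N' : ModuleCat.{u} R}, (N ≅ N') → N ∈ T → N' ∈ T
  submodule_mem : ∀ {N : ModuleCat.{u} R}, N ∈ T → ∀ S : Submodule R N,
    ModuleCat.of R S ∈ T
  quotient_mem : ∀ {N : ModuleCat.{u} R}, N ∈ T → ∀ S : Submodule R N,
    ModuleCat.of R (N ⧸ S) ∈ T
  ext_mem : ∀ {N : ModuleCat.{u} R} (S : Submodule R N),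
    ModuleCat.of R S ∈ T → ModuleCat.of R (N ⧸ S) ∈ T → N ∈ T
  directed_mem : ∀ {N : ModuleCat.{u} R} {ι : Type u} [Nonempty ι] (S : ι → Submodule R N),
    Directed (· ≤ ·) S → (∀ i, ModuleCat.of R (S i) ∈ T) → iSup S = ⊤ → N ∈ T

variable {R : Type u} [CommRing R]

/-- The "outgoing" differential of the Koszul cocomplex `Hom_R(K_•(x), M)`, whose degree `i`
component is indexed by the `i`-element subsets of `{1, …, r}`. -/
def koszulDiff {r : ℕ} (x : Fin r → R) (M : Type u) [AddCommGroup M] [Module R M] (i : ℕ) :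
    ({s : Finset (Fin r) // s.card = i} → M) →ₗ[R]
      ({s : Finset (Fin r) // s.card = i + 1} → M) where
  toFun φ t := ∑ j ∈ t.1.attach,
    ((-1 : R) ^ (t.1.filter (fun k => k < j.1)).card * x j.1) •
      φ ⟨t.1.erase j.1, by simp [Finset.card_erase_of_mem j.2, t.2]⟩
  map_add' φ ψ := by
    funext t
    simp [Finset.sum_add_distrib, smul_add]
  map_smul' c φ := by
    funext t
    simp [Finset.smul_sum, smul_comm c]

/-- The "incoming" differential of the Koszul cocomplex in degree `i`
(its source is trivial when `i = 0`). -/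
def koszulDiffIn {r : ℕ} (x : Fin r → R) (M : Type u) [AddCommGroup M] [Module R M] (i : ℕ) :
    ({s : Finset (Fin r) // s.card + 1 = i} → M) →ₗ[R]
      ({s : Finset (Fin r) // s.card = i} → M) where
  toFun φ t := ∑ j ∈ t.1.attach,
    ((-1 : R) ^ (t.1.filter (fun k => k < j.1)).card * x j.1) •
      φ ⟨t.1.erase j.1, by rw [Finset.card_erase_add_one j.2]; exact t.2⟩
  map_add' φ ψ := by
    funext t
    simp [Finset.sum_add_distrib, smul_add]
  map_smul' c φ := by
    funext t
    simp [Finset.smul_sum, smul_comm c]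

/-- The `i`-th Koszul cohomology `H^i(x; M)` of `M` with respect to `x₁, …, x_r`, i.e. the
`i`-th cohomology of the cocomplex `Hom_R(K_•(x), M)`. -/
abbrev koszulCohomology {r : ℕ} (x : Fin r → R) (M : Type u) [AddCommGroup M] [Module R M]
    (i : ℕ) : Type u :=
  ↥(LinearMap.ker (koszulDiff x M i)) ⧸
    (Submodule.comap (LinearMap.ker (koszulDiff x M i)).subtype
      (LinearMap.range (koszulDiffIn x M i)))

/-- The `𝔗`-Koszul grade of the ideal `(x₁, …, x_r)` on `M`: the infimum of the set of `i`
such that `H^i(x; M) ∉ 𝔗` (with `inf ∅ = +∞`). -/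
def TKgrade (T : Set (ModuleCat.{u} R)) {r : ℕ} (x : Fin r → R) (M : Type u)
    [AddCommGroup M] [Module R M] : ℕ∞ :=
  sInf ((↑· : ℕ → ℕ∞) '' {i | ModuleCat.of R (koszulCohomology x M i) ∉ T})

/-- `x₁, …, x_n` is a weak `M`-regular sequence with respect to `𝔗` if the module
`((x₁,…,x_{i-1})M :_M x_i) / (x₁,…,x_{i-1})M` belongs to `𝔗` for all `i = 1, …, n`. -/
def IsWeakRegularSeqWrt (T : Set (ModuleCat.{u} R)) {n : ℕ} (x : Fin n → R) (M : Type u)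
    [AddCommGroup M] [Module R M] : Prop :=
  ∀ i : Fin n,
    ModuleCat.of R
      ↥(Submodule.map (Ideal.span (x '' {j | j < i}) • (⊤ : Submodule R M)).mkQ
        (Submodule.comap (LinearMap.lsmul R M (x i))
          (Ideal.span (x '' {j | j < i}) • (⊤ : Submodule R M)))) ∈ T

/-- A torsion theory `𝔗` is half centered if every module `N` such that `R/𝔭 ∈ 𝔗` for all
primes `𝔭` in the support of `N` itself belongs to `𝔗`. -/
def IsHalfCentered {R : Type u} [CommRing R] (T : Set (ModuleCat.{u} R)) : Prop :=
  ∀ N : ModuleCat.{u} R,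
    (∀ p ∈ Module.support R N, ModuleCat.of R (R ⧸ p.asIdeal) ∈ T) → N ∈ T

namespace IsTorsionTheory

variable {T : Set (ModuleCat.{u} R)} {M N : Type u} [AddCommGroup M] [Module R M]
  [AddCommGroup N] [Module R N]

theorem mem_of_linearEquiv (hT : IsTorsionTheory R T) (e : M ≃ₗ[R] N)
    (h : ModuleCat.of R M ∈ T) : ModuleCat.of R N ∈ T :=
  hT.mem_of_iso e.toModuleIso h

theorem mem_of_injective (hT : IsTorsionTheory R T) (f : M →ₗ[R] N)
    (hf : Function.Injective f) (h : ModuleCat.of R N ∈ T) : ModuleCat.of R M ∈ T :=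
  hT.mem_of_linearEquiv (LinearEquiv.ofInjective f hf).symm
    (hT.submodule_mem h (LinearMap.range f))

theorem mem_of_surjective (hT : IsTorsionTheory R T) (f : M →ₗ[R] N)
    (hf : Function.Surjective f) (h : ModuleCat.of R M ∈ T) : ModuleCat.of R N ∈ T :=
  hT.mem_of_linearEquiv (f.quotKerEquivOfSurjective hf)
    (hT.quotient_mem h (LinearMap.ker f))

theorem submodule_mono (hT : IsTorsionTheory R T) {A B : Submodule R M} (hAB : A ≤ B)
    (h : ModuleCat.of R B ∈ T) : ModuleCat.of R A ∈ T :=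
  hT.mem_of_injective (Submodule.inclusion hAB) (Submodule.inclusion_injective hAB) h

theorem map_mem (hT : IsTorsionTheory R T) (f : M →ₗ[R] N) {A : Submodule R M}
    (h : ModuleCat.of R A ∈ T) : ModuleCat.of R (A.map f) ∈ T :=
  hT.mem_of_surjective (f.submoduleMap A) (f.submoduleMap_surjective A) h

theorem comap_mem (hT : IsTorsionTheory R T) (f : M →ₗ[R] N) (hf : Function.Injective f)
    {A : Submodule R N} (h : ModuleCat.of R A ∈ T) : ModuleCat.of R (A.comap f) ∈ T :=
  hT.mem_of_injective (f.restrict (p := A.comap f) (q := A) fun _ hx => hx)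
    (fun _ _ hxy => Subtype.ext (hf (congrArg Subtype.val hxy))) h

/-- A submodule lies in `T` as soon as its image under a linear map and its intersection with the
kernel do. -/
theorem mem_of_map_of_inf_ker (hT : IsTorsionTheory R T) (f : M →ₗ[R] N) {A : Submodule R M}
    (hmap : ModuleCat.of R (A.map f) ∈ T)
    (hker : ModuleCat.of R (A ⊓ LinearMap.ker f : Submodule R M) ∈ T) :
    ModuleCat.of R A ∈ T := by
  refine hT.ext_mem (N := ModuleCat.of R A) (LinearMap.ker (f.submoduleMap A)) ?_ ?_
  · refine hT.mem_of_injective (N := (A ⊓ LinearMap.ker f : Submodule R M))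
      (LinearMap.codRestrict _ (A.subtype ∘ₗ (LinearMap.ker (f.submoduleMap A)).subtype)
        fun c => ⟨c.1.2, congrArg Subtype.val c.2⟩) ?_ hker
    exact fun _ _ h => Subtype.ext (Subtype.ext (Subtype.ext_iff.1 h :))
  · exact hT.mem_of_linearEquiv
      ((f.submoduleMap A).quotKerEquivOfSurjective (f.submoduleMap_surjective A)).symm hmap

end IsTorsionTheory

/-- `A` is contained in `B` up to `T`: the module `A / (A ∩ B) ≃ (A + B) / B` belongs to `T`. -/
def LeModulo (T : Set (ModuleCat.{u} R)) {M : Type u} [AddCommGroup M] [Module R M]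
    (A B : Submodule R M) : Prop :=
  ModuleCat.of R (A.map B.mkQ) ∈ T

namespace LeModulo

variable {T : Set (ModuleCat.{u} R)} {M N : Type u} [AddCommGroup M] [Module R M]
  [AddCommGroup N] [Module R N] {A B C : Submodule R M}

theorem of_le (hHC : IsHalfCentered T) (h : A ≤ B) :
    LeModulo T A B := by
  have hbot : A.map B.mkQ = ⊥ := by
    rw [← le_bot_iff, Submodule.map_le_iff_le_comap]
    simpa using h
  have : Subsingleton (A.map B.mkQ) := by rw [hbot]; infer_instance
  refine hHC _ fun p hp => ?_
  rw [Module.support_eq_empty] at hp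
  exact hp.elim

theorem mono_left (hT : IsTorsionTheory R T) (h : LeModulo T B C) (hAB : A ≤ B) :
    LeModulo T A C :=
  hT.submodule_mono (Submodule.map_mono hAB) h

theorem sup_right (hT : IsTorsionTheory R T) (h : LeModulo T A B) (C : Submodule R M) :
    LeModulo T (A ⊔ C) (B ⊔ C) := by
  refine hT.submodule_mono ?_ (hT.map_mem (Submodule.factor (le_sup_left : B ≤ B ⊔ C)) h)
  rw [← Submodule.map_comp, Submodule.factor_comp_mk, Submodule.map_sup, sup_le_iff]
  refine ⟨le_rfl, ?_⟩
  rw [Submodule.map_le_iff_le_comap]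
  intro c hc
  have : (B ⊔ C).mkQ c = 0 := by simpa using Submodule.mem_sup_right hc
  rw [Submodule.mem_comap, this]
  exact zero_mem _

theorem trans (hT : IsTorsionTheory R T) (h₁ : LeModulo T A B) (h₂ : LeModulo T B C) :
    LeModulo T A C := by
  refine hT.mem_of_map_of_inf_ker (Submodule.factor (le_sup_right : C ≤ B ⊔ C)) ?_ ?_
  · refine hT.submodule_mono ?_ (hT.map_mem (Submodule.factor (le_sup_left : B ≤ B ⊔ C)) h₁)
    rw [← Submodule.map_comp, ← Submodule.map_comp, Submodule.factor_comp_mk,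
      Submodule.factor_comp_mk]
  · refine hT.submodule_mono (inf_le_right.trans ?_) h₂
    intro q hq
    obtain ⟨m, rfl⟩ := C.mkQ_surjective q
    have hm : m ∈ B ⊔ C := by simpa using hq
    obtain ⟨b, hb, c, hc, rfl⟩ := Submodule.mem_sup.1 hm
    refine ⟨b, hb, ?_⟩
    have : C.mkQ c = 0 := by simpa using hc
    rw [map_add, this, add_zero]

theorem trans_le (hT : IsTorsionTheory R T) (hHC : IsHalfCentered T) (h₁ : LeModulo T A B)
    (h₂ : B ≤ C) : LeModulo T A C :=
  h₁.trans hT (of_le hHC h₂)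

theorem sup (hT : IsTorsionTheory R T) (hHC : IsHalfCentered T) (h₁ : LeModulo T A C)
    (h₂ : LeModulo T B C) : LeModulo T (A ⊔ B) C :=
  ((h₁.sup_right hT B).trans_le hT hHC (sup_comm _ _).le).trans hT
    ((h₂.sup_right hT C).trans_le hT hHC (sup_idem C).le)

theorem map (hT : IsTorsionTheory R T) (h : LeModulo T A B) (f : M →ₗ[R] N) :
    LeModulo T (A.map f) (B.map f) := by
  refine hT.submodule_mono ?_ (hT.map_mem (B.mapQ (B.map f) f (Submodule.le_comap_map f B)) h)
  rw [← Submodule.map_comp, ← Submodule.map_comp, Submodule.mapQ_mkQ]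

theorem comap (hT : IsTorsionTheory R T) (h : LeModulo T A B) (f : N →ₗ[R] M) :
    LeModulo T (A.comap f) (B.comap f) := by
  have hinj : Function.Injective ((B.comap f).mapQ B f le_rfl) := by
    rw [← LinearMap.ker_eq_bot, Submodule.ker_mapQ]
    simp
  refine hT.submodule_mono ?_ (hT.comap_mem _ hinj h)
  rw [← Submodule.map_le_iff_le_comap, ← Submodule.map_comp, Submodule.mapQ_mkQ,
    Submodule.map_comp]
  exact Submodule.map_mono (Submodule.map_comap_le f A)

theorem pi (hT : IsTorsionTheory R T) (hHC : IsHalfCentered T) (h : LeModulo T A B)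
    (ι : Type) [Finite ι] :
    LeModulo T (Submodule.pi (Set.univ : Set ι) fun _ => A)
      (Submodule.pi (Set.univ : Set ι) fun _ => B) := by
  classical
  have := Fintype.ofFinite ι
  have hS (S : Finset ι) : LeModulo T (S.sup fun j => A.map (LinearMap.single R (fun _ => M) j))
      (Submodule.pi (Set.univ : Set ι) fun _ => B) := by
    induction S using Finset.induction_on with
    | empty => exact of_le hHC (by simp)
    | insert j S _ ih =>
      rw [Finset.sup_insert]
      refine sup hT hHC ((h.map hT _).trans_le hT hHC ?_) ih
      rw [Submodule.map_le_iff_le_comap]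
      intro b hb k _
      by_cases hk : k = j
      · subst hk; simpa using hb
      · simp [hk]
  refine (hS Finset.univ).mono_left hT fun φ hφ => ?_
  rw [← Finset.univ_sum_single φ]
  exact Submodule.sum_mem _ fun j hj =>
    Finset.le_sup (f := fun j => A.map (LinearMap.single R (fun _ => M) j)) hj
      ⟨φ j, hφ j trivial, rfl⟩

theorem comap_iff (hT : IsTorsionTheory R T) (f : N →ₗ[R] M)
    (hf : Function.Surjective f) :
    LeModulo T (A.comap f) (B.comap f) ↔ LeModulo T A B := by
  refine ⟨fun h => ?_, fun h => h.comap hT f⟩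
  simpa only [Submodule.map_comap_eq_of_surjective hf] using h.map hT f

theorem quotient_comap_mem_iff (hT : IsTorsionTheory R T) (A B : Submodule R M) :
    ModuleCat.of R (A ⧸ B.comap A.subtype) ∈ T ↔ LeModulo T A B := by
  have hker : B.comap A.subtype = LinearMap.ker (B.mkQ ∘ₗ A.subtype) := by
    rw [LinearMap.ker_comp, Submodule.ker_mkQ]
  have hrange : LinearMap.range (B.mkQ ∘ₗ A.subtype) = A.map B.mkQ := by
    rw [LinearMap.range_comp, Submodule.range_subtype]
  let e : (A ⧸ B.comap A.subtype) ≃ₗ[R] A.map B.mkQ :=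
    (Submodule.quotEquivOfEq _ _ hker).trans
      ((B.mkQ ∘ₗ A.subtype).quotKerEquivRange.trans (LinearEquiv.ofEq _ _ hrange))
  exact ⟨hT.mem_of_linearEquiv e, hT.mem_of_linearEquiv e.symm⟩

end LeModulo

section CochainComplex

variable {T : Set (ModuleCat.{u} R)} {C₀ C₁ C₂ : Type u} [AddCommGroup C₀] [Module R C₀]
  [AddCommGroup C₁] [Module R C₁] [AddCommGroup C₂] [Module R C₂]

/-- Let `C₀ → C₁ → C₂` be part of a cochain complex and `W` a subcomplex. If `x` is injective on
`C / W` up to `T` and kills the cohomology of `C / W`, then the vanishing up to `T` of the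
cohomology of `C / (W + x C)` at `C₀` implies that of `C / W` at `C₁`. -/
theorem LeModulo.comap_succ (hT : IsTorsionTheory R T) (hHC : IsHalfCentered T)
    {d₀ : C₀ →ₗ[R] C₁} {d₁ : C₁ →ₗ[R] C₂} {x : R}
    {B₀ W₀ : Submodule R C₀} {W₁ : Submodule R C₁} {W₂ : Submodule R C₂}
    (hB₀ : B₀ ≤ LinearMap.ker d₀) (hW₀ : W₀ ≤ W₁.comap d₀)
    (hx : (W₂.comap d₁).map (LinearMap.lsmul R C₁ x) ≤ LinearMap.range d₀ ⊔ W₁)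
    (hreg : LeModulo T (W₁.comap (LinearMap.lsmul R C₁ x)) W₁)
    (h : LeModulo T ((W₁ ⊔ LinearMap.range (LinearMap.lsmul R C₁ x)).comap d₀)
      (B₀ ⊔ (W₀ ⊔ LinearMap.range (LinearMap.lsmul R C₀ x)))) :
    LeModulo T (W₂.comap d₁) (LinearMap.range d₀ ⊔ W₁) := by
  set m := LinearMap.lsmul R C₁ x with hm
  have h₁ : (W₂.comap d₁).map m ≤ ((W₁ ⊔ LinearMap.range m).comap d₀).map d₀ ⊔ W₁ := by
    rintro _ ⟨z, hz, rfl⟩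
    obtain ⟨_, ⟨c, rfl⟩, w, hw, hcw⟩ := Submodule.mem_sup.1 (hx ⟨z, hz, rfl⟩)
    rw [← hcw]
    refine Submodule.add_mem_sup ⟨c, ?_, rfl⟩ hw
    rw [SetLike.mem_coe, Submodule.mem_comap, ← sub_eq_of_eq_add hcw.symm, sub_eq_neg_add]
    exact Submodule.add_mem_sup (neg_mem hw) ⟨z, rfl⟩
  have h₂ : (B₀ ⊔ (W₀ ⊔ LinearMap.range (LinearMap.lsmul R C₀ x))).map d₀ ⊔ W₁ ≤
      (LinearMap.range d₀).map m ⊔ W₁ := by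
    simp only [Submodule.map_sup, sup_le_iff]
    refine ⟨⟨?_, ?_, ?_⟩, le_sup_right⟩
    · rintro _ ⟨b, hb, rfl⟩
      rw [LinearMap.mem_ker.1 (hB₀ hb)]
      exact zero_mem _
    · exact (Submodule.map_le_iff_le_comap.2 hW₀).trans le_sup_right
    · rintro _ ⟨_, ⟨c, rfl⟩, rfl⟩
      exact Submodule.mem_sup_left ⟨d₀ c, ⟨c, rfl⟩, by simp [hm]⟩
  have h₃ : LeModulo T ((W₂.comap d₁).map m) ((LinearMap.range d₀).map m ⊔ W₁) :=
    (((h.map hT d₀).sup_right hT W₁).mono_left hT h₁).trans_le hT hHC h₂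
  have h₄ : ((LinearMap.range d₀).map m ⊔ W₁).comap m ≤ W₁.comap m ⊔ LinearMap.range d₀ := by
    intro z hz
    obtain ⟨_, ⟨b, hb, rfl⟩, w, hw, hbw⟩ := Submodule.mem_sup.1 (Submodule.mem_comap.1 hz)
    refine Submodule.mem_sup.2 ⟨z - b, ?_, b, hb, sub_add_cancel z b⟩
    rw [Submodule.mem_comap, map_sub, ← hbw, add_sub_cancel_left]
    exact hw
  exact ((((h₃.comap hT m).mono_left hT (Submodule.le_comap_map _ _)).trans_le hT hHC h₄).trans hT
    (hreg.sup_right hT _)).trans_le hT hHC (sup_comm _ _).le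

/-- Let `C₀ → C₁ → C₂` be part of a cochain complex and `W` a subcomplex. If `x` is injective on
`C / W` up to `T`, then the vanishing up to `T` of the cohomology of `C / W` at `C₀` and `C₁`
implies that of `C / (W + x C)` at `C₀`. -/
theorem LeModulo.comap_sup_range_lsmul (hT : IsTorsionTheory R T) (hHC : IsHalfCentered T)
    {d₀ : C₀ →ₗ[R] C₁} {d₁ : C₁ →ₗ[R] C₂} (hd : d₁ ∘ₗ d₀ = 0) {x : R}
    {B₀ W₀ : Submodule R C₀} {W₁ : Submodule R C₁} {W₂ : Submodule R C₂}
    (hW₁ : W₁ ≤ W₂.comap d₁)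
    (hreg : LeModulo T (W₂.comap (LinearMap.lsmul R C₂ x)) W₂)
    (h₀ : LeModulo T (W₁.comap d₀) (B₀ ⊔ W₀))
    (h₁ : LeModulo T (W₂.comap d₁) (LinearMap.range d₀ ⊔ W₁)) :
    LeModulo T ((W₁ ⊔ LinearMap.range (LinearMap.lsmul R C₁ x)).comap d₀)
      (B₀ ⊔ (W₀ ⊔ LinearMap.range (LinearMap.lsmul R C₀ x))) := by
  set m := LinearMap.lsmul R C₁ x with hm
  set E := (W₂.comap (LinearMap.lsmul R C₂ x)).comap d₁ with hE
  have hdd (c : C₀) : d₁ (d₀ c) = 0 := LinearMap.congr_fun hd c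
  have h₂ : ((W₁ ⊔ LinearMap.range m).comap d₀).map d₀ ≤ E.map m ⊔ W₁ := by
    rintro _ ⟨c, hc, rfl⟩
    obtain ⟨w, hw, _, ⟨e, rfl⟩, hwe⟩ := Submodule.mem_sup.1 (Submodule.mem_comap.1 hc)
    rw [← hwe, add_comm]
    refine Submodule.add_mem_sup ⟨e, ?_, rfl⟩ hw
    have : x • d₁ e = -d₁ w := by
      rw [eq_neg_iff_add_eq_zero, add_comm, ← hdd c, ← hwe]
      simp [hm]
    simp only [hE, SetLike.mem_coe, Submodule.mem_comap, LinearMap.lsmul_apply, this]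
    exact neg_mem (hW₁ hw)
  have h₃ : (LinearMap.range d₀ ⊔ W₁).map m ⊔ W₁ ≤
      (LinearMap.range (LinearMap.lsmul R C₀ x)).map d₀ ⊔ W₁ := by
    rw [Submodule.map_sup, sup_le_iff, sup_le_iff]
    refine ⟨⟨?_, ?_⟩, le_sup_right⟩
    · rintro _ ⟨_, ⟨c, rfl⟩, rfl⟩
      exact Submodule.mem_sup_left ⟨x • c, ⟨c, rfl⟩, by simp [hm]⟩
    · rintro _ ⟨w, hw, rfl⟩
      exact Submodule.mem_sup_right (W₁.smul_mem x hw)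
  have h₄ : LeModulo T (((W₁ ⊔ LinearMap.range m).comap d₀).map d₀)
      ((LinearMap.range (LinearMap.lsmul R C₀ x)).map d₀ ⊔ W₁) :=
    (((((hreg.comap hT d₁).trans hT h₁).map hT m).sup_right hT W₁).mono_left hT h₂).trans_le
      hT hHC h₃
  have h₅ : ((LinearMap.range (LinearMap.lsmul R C₀ x)).map d₀ ⊔ W₁).comap d₀ ≤
      W₁.comap d₀ ⊔ LinearMap.range (LinearMap.lsmul R C₀ x) := by
    intro c hc
    obtain ⟨_, ⟨b, hb, rfl⟩, w, hw, hbw⟩ := Submodule.mem_sup.1 (Submodule.mem_comap.1 hc)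
    refine Submodule.mem_sup.2 ⟨c - b, ?_, b, hb, sub_add_cancel c b⟩
    rw [Submodule.mem_comap, map_sub, ← hbw, add_sub_cancel_left]
    exact hw
  exact ((((h₄.comap hT d₀).mono_left hT (Submodule.le_comap_map _ _)).trans_le hT hHC h₅).trans hT
    (h₀.sup_right hT _)).trans_le hT hHC (sup_assoc _ _ _).le

end CochainComplex

section Koszul

/-- The sign `(-1) ^ #{k ∈ t | k < j}` of the Koszul differential. -/
def koszulSign (R : Type*) [CommRing R] {s : ℕ} (j : Fin s) (t : Finset (Fin s)) : R :=
  (-1) ^ (t.filter (fun k => k < j)).card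

variable {s : ℕ}

theorem koszulSign_mul_self (j : Fin s) (t : Finset (Fin s)) :
    koszulSign R j t * koszulSign R j t = 1 := by
  rw [koszulSign, ← mul_pow]
  simp

theorem koszulSign_erase_of_le {j k : Fin s} (hjk : j ≤ k) (t : Finset (Fin s)) :
    koszulSign R j (t.erase k) = koszulSign R j t := by
  rw [koszulSign, Finset.filter_erase, Finset.erase_eq_of_notMem (by simp [hjk]), koszulSign]

theorem koszulSign_erase_of_lt {j k : Fin s} (hjk : j < k) {t : Finset (Fin s)} (hj : j ∈ t) :
    koszulSign R k (t.erase j) = -koszulSign R k t := by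
  rw [koszulSign, koszulSign, Finset.filter_erase,
    ← Finset.card_erase_add_one (s := t.filter (fun l => l < k)) (a := j) (by simp [hj, hjk])]
  ring

theorem koszulSign_mul_erase {j k : Fin s} (hjk : j ≠ k) {t : Finset (Fin s)} (hj : j ∈ t)
    (hk : k ∈ t) : koszulSign R j t * koszulSign R k (t.erase j) =
      -(koszulSign R k t * koszulSign R j (t.erase k)) := by
  rcases hjk.lt_or_gt with h | h
  · rw [koszulSign_erase_of_lt h hj, koszulSign_erase_of_le h.le]
    ring
  · rw [koszulSign_erase_of_lt h hk, koszulSign_erase_of_le h.le]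
    ring

variable {M : Type u} [AddCommGroup M] [Module R M]

/-- The Koszul differential on the direct sum of all terms of the Koszul cocomplex. -/
def koszulTotalDiff (y : Fin s → R) (φ : Finset (Fin s) → M) (t : Finset (Fin s)) : M :=
  ∑ j ∈ t, (koszulSign R j t * y j) • φ (t.erase j)

/-- Contraction against the `k`-th basis vector. -/
def koszulContract (R : Type*) [CommRing R] [Module R M] (k : Fin s) (φ : Finset (Fin s) → M)
    (t : Finset (Fin s)) : M :=
  if k ∈ t then 0 else koszulSign R k t • φ (insert k t)

theorem koszulTotalDiff_koszulTotalDiff (y : Fin s → R) (φ : Finset (Fin s) → M) :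
    koszulTotalDiff y (koszulTotalDiff y φ) = 0 := by
  funext t
  simp only [koszulTotalDiff, Finset.smul_sum, smul_smul, Pi.zero_apply]
  rw [Finset.sum_sigma']
  refine Finset.sum_involution (fun p _ => ⟨p.2, p.1⟩) ?_ ?_ ?_ ?_
  · rintro ⟨j, k⟩ h
    simp only [Finset.mem_sigma, Finset.mem_erase] at h
    rw [Finset.erase_right_comm, ← add_smul]
    convert zero_smul R (φ ((t.erase k).erase j))
    linear_combination (y j * y k) * koszulSign_mul_erase (R := R) h.2.1.symm h.1 h.2.2
  · rintro ⟨j, k⟩ h _ heq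
    simp only [Finset.mem_sigma, Finset.mem_erase] at h
    exact h.2.1 (congrArg Sigma.fst heq)
  · rintro ⟨j, k⟩ h
    simp only [Finset.mem_sigma, Finset.mem_erase] at h ⊢
    exact ⟨h.2.2, h.2.1.symm, h.1⟩
  · rintro ⟨j, k⟩ _
    rfl

/-- Contraction against the `k`-th basis vector is a homotopy between multiplication by `y k` and
zero. -/
theorem koszulTotalDiff_koszulContract_add (y : Fin s → R) (k : Fin s)
    (φ : Finset (Fin s) → M) (t : Finset (Fin s)) :
    koszulTotalDiff y (koszulContract R k φ) t + koszulContract R k (koszulTotalDiff y φ) t =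
      y k • φ t := by
  by_cases hk : k ∈ t
  · rw [koszulContract, if_pos hk, add_zero, koszulTotalDiff, Finset.sum_eq_single_of_mem k hk]
    · rw [koszulContract, if_neg (Finset.notMem_erase k t), koszulSign_erase_of_le le_rfl,
        Finset.insert_erase hk, smul_smul]
      congr 1
      linear_combination y k * koszulSign_mul_self (R := R) k t
    · intro j _ hjk
      rw [koszulContract, if_pos (Finset.mem_erase.2 ⟨hjk.symm, hk⟩), smul_zero]
  · have hself := koszulSign_erase_of_le (R := R) (le_refl k) (insert k t)
    rw [Finset.erase_insert hk] at hself
    rw [koszulContract, if_neg hk, koszulTotalDiff, koszulTotalDiff, Finset.sum_insert hk,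
      Finset.erase_insert hk, smul_add, smul_smul, ← hself, add_left_comm, Finset.smul_sum,
      ← Finset.sum_add_distrib, Finset.sum_eq_zero, add_zero]
    · congr 1
      linear_combination y k * koszulSign_mul_self (R := R) k t
    · intro j hj
      have hjk : j ≠ k := fun h => hk (h ▸ hj)
      have hsign := koszulSign_mul_erase (R := R) hjk (Finset.mem_insert_of_mem hj)
        (Finset.mem_insert_self k t)
      have herase := koszulSign_erase_of_le (R := R) (le_refl k) (insert k (t.erase j))
      rw [Finset.erase_insert fun h => hk (Finset.mem_of_mem_erase h)] at herase
      rw [Finset.erase_insert hk, Finset.erase_insert_of_ne hjk.symm, ← herase, ← hself] at hsign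
      rw [koszulContract, if_neg fun h => hk (Finset.mem_of_mem_erase h),
        Finset.erase_insert_of_ne hjk.symm, smul_smul, smul_smul, ← add_smul]
      convert zero_smul R (φ (insert k (t.erase j)))
      have h₁ := koszulSign_mul_self (R := R) k (t.erase j)
      have h₂ := koszulSign_mul_self (R := R) k t
      linear_combination y j * (koszulSign R k t * koszulSign R k (t.erase j) * hsign -
        koszulSign R k t * koszulSign R j (insert k t) * h₁ -
        koszulSign R j t * koszulSign R k (t.erase j) * h₂)

/-- Extension by zero of a Koszul cochain to all finite subsets. -/
def koszulExtend {i : ℕ} (φ : {t : Finset (Fin s) // t.card = i} → M) (t : Finset (Fin s)) : M :=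
  if h : t.card = i then φ ⟨t, h⟩ else 0

theorem koszulTotalDiff_koszulExtend (y : Fin s → R) {i : ℕ}
    (φ : {t : Finset (Fin s) // t.card = i} → M) :
    koszulTotalDiff y (koszulExtend φ) = koszulExtend (koszulDiff y M i φ) := by
  funext t
  by_cases ht : t.card = i + 1
  · rw [koszulExtend, dif_pos ht, koszulTotalDiff, ← Finset.sum_attach]
    refine Finset.sum_congr rfl fun j _ => ?_
    rw [koszulExtend, dif_pos (by simp [Finset.card_erase_of_mem j.2, ht]), koszulSign]
  · rw [koszulExtend, dif_neg ht, koszulTotalDiff]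
    refine Finset.sum_eq_zero fun j hj => ?_
    rw [koszulExtend, dif_neg fun h => ht (by rw [← h, Finset.card_erase_add_one hj]), smul_zero]

theorem koszulDiff_comp_koszulDiff (y : Fin s → R) (i : ℕ) :
    koszulDiff y M (i + 1) ∘ₗ koszulDiff y M i = 0 := by
  refine LinearMap.ext fun φ => funext fun t => ?_
  have h := congrFun (koszulTotalDiff_koszulTotalDiff y (koszulExtend φ)) t.1
  rw [koszulTotalDiff_koszulExtend, koszulTotalDiff_koszulExtend, koszulExtend, dif_pos t.2] at h
  exact h

theorem range_koszulDiffIn_succ (y : Fin s → R) (i : ℕ) :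
    LinearMap.range (koszulDiffIn y M (i + 1)) = LinearMap.range (koszulDiff y M i) := by
  ext ψ
  constructor
  · rintro ⟨φ, rfl⟩
    exact ⟨fun t => φ ⟨t.1, congrArg (· + 1) t.2⟩, rfl⟩
  · rintro ⟨φ, rfl⟩
    exact ⟨fun t => φ ⟨t.1, Nat.succ_injective t.2⟩, rfl⟩

theorem range_koszulDiffIn_zero (y : Fin s → R) :
    LinearMap.range (koszulDiffIn y M 0) = ⊥ := by
  have : IsEmpty {t : Finset (Fin s) // t.card + 1 = 0} := ⟨fun t => Nat.succ_ne_zero _ t.2⟩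
  rw [LinearMap.range_eq_bot]
  exact Subsingleton.elim _ _

theorem range_koszulDiffIn_le_ker (y : Fin s → R) (i : ℕ) :
    LinearMap.range (koszulDiffIn y M i) ≤ LinearMap.ker (koszulDiff y M i) := by
  cases i with
  | zero => simp [range_koszulDiffIn_zero]
  | succ i =>
    rw [range_koszulDiffIn_succ, LinearMap.range_le_ker_iff]
    exact koszulDiff_comp_koszulDiff y i

/-- The Koszul cochains of degree `i` with values in the submodule `W`. -/
abbrev koszulCochains (s i : ℕ) (W : Submodule R M) :
    Submodule R ({t : Finset (Fin s) // t.card = i} → M) :=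
  Submodule.pi Set.univ fun _ => W

theorem koszulCochains_le_comap (y : Fin s → R) (i : ℕ) (W : Submodule R M) :
    koszulCochains s i W ≤ (koszulCochains s (i + 1) W).comap (koszulDiff y M i) :=
  fun _ hφ _ _ => Submodule.sum_mem _ fun _ _ => W.smul_mem _ (hφ _ trivial)

theorem koszulCochains_sup_range_lsmul (s i : ℕ) (W : Submodule R M) (x : R) :
    koszulCochains s i (W ⊔ LinearMap.range (LinearMap.lsmul R M x)) =
      koszulCochains s i W ⊔
        LinearMap.range (LinearMap.lsmul R ({t : Finset (Fin s) // t.card = i} → M) x) := by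
  refine le_antisymm (fun φ hφ => ?_) (sup_le ?_ ?_)
  · have h (t) : ∃ w ∈ W, ∃ m : M, w + x • m = φ t := by
      obtain ⟨w, hw, _, ⟨m, rfl⟩, h⟩ := Submodule.mem_sup.1 (hφ t trivial)
      exact ⟨w, hw, m, h⟩
    choose w hw m hwm using h
    exact Submodule.mem_sup.2 ⟨w, fun t _ => hw t, x • m, ⟨m, rfl⟩, funext hwm⟩
  · exact fun φ hφ t _ => Submodule.mem_sup_left (hφ t trivial)
  · rintro _ ⟨m, rfl⟩ t _
    exact Submodule.mem_sup_right ⟨m t, rfl⟩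

/-- The elements of `(y)` annihilate the Koszul cohomology of `M / W`. -/
theorem smul_mem_range_koszulDiffIn_sup (y : Fin s → R) (i : ℕ) (W : Submodule R M) {x : R}
    (hx : x ∈ Ideal.span (Set.range y)) {z : {t : Finset (Fin s) // t.card = i} → M}
    (hz : z ∈ (koszulCochains s (i + 1) W).comap (koszulDiff y M i)) :
    x • z ∈ LinearMap.range (koszulDiffIn y M i) ⊔ koszulCochains s i W := by
  induction hx using Submodule.span_induction with
  | zero => simp
  | add a b _ _ ha hb => rw [add_smul]; exact add_mem ha hb
  | smul c a _ ha => rw [smul_eq_mul, mul_smul]; exact Submodule.smul_mem _ c ha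
  | mem _ h =>
    obtain ⟨k, rfl⟩ := h
    refine Submodule.mem_sup.2 ⟨_, ⟨fun t => koszulContract R k (koszulExtend z) t.1, rfl⟩,
      fun t => koszulContract R k (koszulTotalDiff y (koszulExtend z)) t.1, ?_, ?_⟩
    · intro t _
      rw [koszulTotalDiff_koszulExtend]
      simp only [koszulContract, koszulExtend]
      split_ifs with h₁ h₂
      · exact W.zero_mem
      · exact W.smul_mem _ (hz _ trivial)
      · simp
    · funext t
      have h := koszulTotalDiff_koszulContract_add y k (koszulExtend z) t.1
      rw [koszulExtend, dif_pos t.2, koszulTotalDiff, ← Finset.sum_attach] at h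
      exact h

/-- The cohomology `H^i(y; M / W)` belongs to `T`, in terms of submodules of the Koszul cocomplex
of `M`. -/
def KoszulVanishes (T : Set (ModuleCat.{u} R)) (y : Fin s → R) (W : Submodule R M) (i : ℕ) :
    Prop :=
  LeModulo T ((koszulCochains s (i + 1) W).comap (koszulDiff y M i))
    (LinearMap.range (koszulDiffIn y M i) ⊔ koszulCochains s i W)

variable {T : Set (ModuleCat.{u} R)}

theorem koszulVanishes_bot_iff (hT : IsTorsionTheory R T) (y : Fin s → R) (i : ℕ) :
    KoszulVanishes T y (⊥ : Submodule R M) i ↔ ModuleCat.of R (koszulCohomology y M i) ∈ T := by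
  have hbot (i : ℕ) : koszulCochains s i (⊥ : Submodule R M) = ⊥ := Submodule.pi_univ_bot
  rw [LeModulo.quotient_comap_mem_iff hT, KoszulVanishes, hbot, hbot, sup_bot_eq,
    Submodule.comap_bot]

theorem koszulVanishes_zero_iff (hT : IsTorsionTheory R T) (y : Fin s → R) (W : Submodule R M) :
    KoszulVanishes T y W 0 ↔ ModuleCat.of R (koszulCohomology y (M ⧸ W) 0) ∈ T := by
  have hsurj : Function.Surjective
      (W.mkQ.compLeft {t : Finset (Fin s) // t.card = 0}) := W.mkQ_surjective.comp_left
  rw [LeModulo.quotient_comap_mem_iff hT, KoszulVanishes, range_koszulDiffIn_zero, bot_sup_eq,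
    range_koszulDiffIn_zero, ← LeModulo.comap_iff hT _ hsurj]
  have hcomm (φ : {t : Finset (Fin s) // t.card = 0} → M) :
      koszulDiff y (M ⧸ W) 0 (W.mkQ.compLeft _ φ) = W.mkQ.compLeft _ (koszulDiff y M 0 φ) := by
    funext t
    simp [koszulDiff]
  have hmem (i : ℕ) (φ : {t : Finset (Fin s) // t.card = i} → M) :
      W.mkQ.compLeft _ φ = 0 ↔ φ ∈ koszulCochains s i W := by
    simp [funext_iff, Submodule.mem_pi]
  have hker : (LinearMap.ker (koszulDiff y (M ⧸ W) 0)).comap (W.mkQ.compLeft _) =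
      (koszulCochains s 1 W).comap (koszulDiff y M 0) := by
    ext φ
    rw [Submodule.mem_comap, LinearMap.mem_ker, hcomm, hmem, Submodule.mem_comap]
  have hbot : (⊥ : Submodule R _).comap (W.mkQ.compLeft _) = koszulCochains s 0 W := by
    ext φ
    rw [Submodule.mem_comap, Submodule.mem_bot, hmem]
  rw [hker, hbot]

variable {y : Fin s → R} {W : Submodule R M} {x : R}

theorem KoszulVanishes.zero (hT : IsTorsionTheory R T) (hHC : IsHalfCentered T)
    (hx : x ∈ Ideal.span (Set.range y)) (hreg : LeModulo T (W.comap (LinearMap.lsmul R M x)) W) :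
    KoszulVanishes T y W 0 := by
  rw [KoszulVanishes, range_koszulDiffIn_zero, bot_sup_eq]
  refine (hreg.pi hT hHC _).mono_left hT fun z hz t _ => ?_
  have h := smul_mem_range_koszulDiffIn_sup y 0 W hx hz
  rw [range_koszulDiffIn_zero, bot_sup_eq] at h
  exact h t trivial

theorem KoszulVanishes.succ (hT : IsTorsionTheory R T) (hHC : IsHalfCentered T)
    (hx : x ∈ Ideal.span (Set.range y)) (hreg : LeModulo T (W.comap (LinearMap.lsmul R M x)) W)
    {i : ℕ} (h : KoszulVanishes T y (W ⊔ LinearMap.range (LinearMap.lsmul R M x)) i) :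
    KoszulVanishes T y W (i + 1) := by
  rw [KoszulVanishes, koszulCochains_sup_range_lsmul, koszulCochains_sup_range_lsmul] at h
  rw [KoszulVanishes, range_koszulDiffIn_succ]
  refine LeModulo.comap_succ hT hHC (range_koszulDiffIn_le_ker y i)
    (koszulCochains_le_comap y i W) ?_ (hreg.pi hT hHC _) h
  rintro _ ⟨z, hz, rfl⟩
  rw [← range_koszulDiffIn_succ]
  exact smul_mem_range_koszulDiffIn_sup y (i + 1) W hx hz

theorem KoszulVanishes.sup_range_lsmul (hT : IsTorsionTheory R T) (hHC : IsHalfCentered T)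
    (hreg : LeModulo T (W.comap (LinearMap.lsmul R M x)) W) {i : ℕ}
    (h₀ : KoszulVanishes T y W i) (h₁ : KoszulVanishes T y W (i + 1)) :
    KoszulVanishes T y (W ⊔ LinearMap.range (LinearMap.lsmul R M x)) i := by
  rw [KoszulVanishes, koszulCochains_sup_range_lsmul, koszulCochains_sup_range_lsmul]
  rw [KoszulVanishes, range_koszulDiffIn_succ] at h₁
  exact LeModulo.comap_sup_range_lsmul hT hHC (koszulDiff_comp_koszulDiff y i)
    (koszulCochains_le_comap y (i + 1) W) (hreg.pi hT hHC _) h₀ h₁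

/-- Koszul cohomology along a chain of submodules obtained by successively adding `x k • M`. -/
theorem koszulVanishes_of_chain (hT : IsTorsionTheory R T) (hHC : IsHalfCentered T)
    (V : ℕ → Submodule R M) (x : ℕ → R) (r n k : ℕ) (hk : k + n = r)
    (hx : ∀ j < r, x j ∈ Ideal.span (Set.range y))
    (hV : ∀ j < r, V (j + 1) = V j ⊔ LinearMap.range (LinearMap.lsmul R M (x j)))
    (hreg : ∀ j < r, LeModulo T ((V j).comap (LinearMap.lsmul R M (x j))) (V j)) :
    (∀ i < n, KoszulVanishes T y (V k) i) ∧
      (KoszulVanishes T y (V k) n ↔ KoszulVanishes T y (V r) 0) := by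
  induction n generalizing k with
  | zero => simp [← hk]
  | succ n ih =>
    have hkr : k < r := by omega
    obtain ⟨hlt, hiff⟩ := ih (k + 1) (by omega)
    rw [hV k hkr] at hlt hiff
    have hvan (i : ℕ) (hi : i < n + 1) : KoszulVanishes T y (V k) i := by
      cases i with
      | zero => exact .zero hT hHC (hx k hkr) (hreg k hkr)
      | succ i => exact .succ hT hHC (hx k hkr) (hreg k hkr) (hlt i (by omega))
    refine ⟨hvan, fun h => hiff.1 ?_, fun h => ?_⟩
    · exact .sup_range_lsmul hT hHC (hreg k hkr) (hvan n n.lt_succ_self) h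
    · exact .succ hT hHC (hx k hkr) (hreg k hkr) (hiff.2 h)

end Koszul

/-- **Theorem.** Let `𝔗` be a half centered torsion theory, `𝔞` a finitely generated ideal
of `R` with generating set `y₁, …, y_s` and `M` an `R`-module. If `x₁, …, x_r` is a weak
`M`-regular sequence with respect to `𝔗` consisting of elements of `𝔞`, then
`H^i(y; M) ∈ 𝔗` for all `0 ≤ i ≤ r - 1`, and moreover `H^r(y; M) ∉ 𝔗` if and only if
`H^0(y; M/(x₁,…,x_r)M) ∉ 𝔗`. -/
theorem koszulCohomology_mem_of_isWeakRegularSeqWrt (T : Set (ModuleCat.{u} R))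
    (hT : IsTorsionTheory R T) (hHC : IsHalfCentered T)
    (a : Ideal R) (M : Type u) [AddCommGroup M] [Module R M]
    {s : ℕ} (y : Fin s → R) (hy : Ideal.span (Set.range y) = a)
    {r : ℕ} (x : Fin r → R) (hxa : ∀ i, x i ∈ a) (hx : IsWeakRegularSeqWrt T x M) :
    (∀ i < r, ModuleCat.of R (koszulCohomology y M i) ∈ T) ∧
      (ModuleCat.of R (koszulCohomology y M r) ∉ T ↔
        ModuleCat.of R (koszulCohomology y
          (M ⧸ (Ideal.span (Set.range x) • (⊤ : Submodule R M))) 0) ∉ T) := by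
  subst hy
  let x' : ℕ → R := fun j => if h : j < r then x ⟨j, h⟩ else 0
  let V : ℕ → Submodule R M := fun k => Ideal.span (x '' {j | j.val < k}) • ⊤
  have hx' (j : ℕ) (hj : j < r) : x' j = x ⟨j, hj⟩ := dif_pos hj
  have hV (k : ℕ) (hk : k < r) :
      V (k + 1) = V k ⊔ LinearMap.range (LinearMap.lsmul R M (x' k)) := by
    have hset : {j : Fin r | j.val < k + 1} = {j | j.val < k} ∪ {⟨k, hk⟩} := by
      ext j
      simp [Fin.ext_iff, le_iff_eq_or_lt]
    simp only [V]
    rw [hset, Set.image_union, Set.image_singleton, Ideal.span_union, Submodule.sup_smul, hx' k hk,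
      Submodule.ideal_span_singleton_smul]
    congr 1
    ext m
    simp [Submodule.mem_smul_pointwise_iff_exists]
  obtain ⟨hlt, hiff⟩ := koszulVanishes_of_chain (y := y) hT hHC V x' r r 0 r.zero_add
    (fun j hj => hx' j hj ▸ hxa ⟨j, hj⟩) hV (fun j hj => hx' j hj ▸ hx ⟨j, hj⟩)
  have hV₀ : V 0 = ⊥ := by simp [V]
  have hVr : V r = Ideal.span (Set.range x) • ⊤ := by simp [V]
  rw [hV₀] at hlt hiff
  rw [hVr] at hiff
  rw [← koszulVanishes_bot_iff hT, ← koszulVanishes_zero_iff hT]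
  exact ⟨fun i hi => (koszulVanishes_bot_iff hT y i).1 (hlt i hi), not_congr hiff⟩
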